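/- Any two almost conjugate finite subgroups of SU(2) are conjugate in SU(2). -/

import Mathlib

/-- Two subgroups `Γ₁`, `Γ₂` of a group `G` are almost conjugate if there is a bijection
`φ : Γ₁ → Γ₂` such that every `γ ∈ Γ₁` is conjugate in `G` to `φ γ`. -/
def AlmostConjugate {G : Type*} [Group G] (Γ₁ Γ₂ : Subgroup G) : Prop :=
  ∃ φ : Γ₁ ≃ Γ₂, ∀ γ : Γ₁, IsConj (γ : G) ((φ γ : Γ₂) : G)

namespace UnitQuaternion

open Quaternion

/-- The real part of a unit quaternion (half of the trace of the corresponding matrix). -/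
def rePart (x : unitary (Quaternion ℝ)) : ℝ := (x : Quaternion ℝ).re

theorem normSq_eq_one (x : unitary (Quaternion ℝ)) :
    (x : Quaternion ℝ).re ^ 2 + (x : Quaternion ℝ).imI ^ 2 + (x : Quaternion ℝ).imJ ^ 2 +
      (x : Quaternion ℝ).imK ^ 2 = 1 := by
  rw [← normSq_def', normSq_def, (Unitary.mem_iff.1 x.2).2, re_one]

theorem mem_unitary_of_normSq {q : Quaternion ℝ} (h : normSq q = 1) :
    q ∈ unitary (Quaternion ℝ) := by
  rw [Unitary.mem_iff, star_mul_self, self_mul_star, h]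
  simp

theorem coe_inv_eq_star (x : unitary (Quaternion ℝ)) :
    ((x⁻¹ : unitary (Quaternion ℝ)) : Quaternion ℝ) = star (x : Quaternion ℝ) := by
  rw [← Unitary.star_eq_inv, Unitary.coe_star]

/-- The quaternion with the given coordinates. -/
def ofCoords (r x y z : ℝ) : Quaternion ℝ := ⟨r, x, y, z⟩

@[simp] theorem re_ofCoords (r x y z : ℝ) : (ofCoords r x y z).re = r := rfl

@[simp] theorem imI_ofCoords (r x y z : ℝ) : (ofCoords r x y z).imI = x := rfl

@[simp] theorem imJ_ofCoords (r x y z : ℝ) : (ofCoords r x y z).imJ = y := rfl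

@[simp] theorem imK_ofCoords (r x y z : ℝ) : (ofCoords r x y z).imK = z := rfl

theorem rePart_one : rePart 1 = 1 := by simp [rePart]

theorem rePart_neg (x : unitary (Quaternion ℝ)) : rePart (-x) = -rePart x := by
  simp [rePart, Unitary.coe_neg]

theorem rePart_inv (x : unitary (Quaternion ℝ)) : rePart x⁻¹ = rePart x := by
  simp [rePart, coe_inv_eq_star]

theorem rePart_mul_comm (x y : unitary (Quaternion ℝ)) : rePart (x * y) = rePart (y * x) := by
  simp only [rePart, Submonoid.coe_mul, re_mul]
  ring

theorem rePart_conj (g x : unitary (Quaternion ℝ)) : rePart (g * x * g⁻¹) = rePart x := by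
  rw [rePart_mul_comm, inv_mul_cancel_left]

theorem rePart_eq_of_isConj {x y : unitary (Quaternion ℝ)} (h : IsConj x y) :
    rePart x = rePart y := by
  obtain ⟨g, rfl⟩ := isConj_iff.1 h
  rw [rePart_conj]

theorem rePart_mul_add (x y : unitary (Quaternion ℝ)) :
    rePart (x * y) + rePart (x⁻¹ * y) = 2 * rePart x * rePart y := by
  simp only [rePart, Submonoid.coe_mul, re_mul, coe_inv_eq_star, re_star, imI_star, imJ_star,
    imK_star]
  ring

theorem rePart_mul_self (x : unitary (Quaternion ℝ)) :
    rePart (x * x) = 2 * rePart x ^ 2 - 1 := by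
  have := rePart_mul_add x x
  rw [inv_mul_cancel, rePart_one] at this
  linarith

theorem rePart_sq_le_one (x : unitary (Quaternion ℝ)) : rePart x ^ 2 ≤ 1 := by
  have := normSq_eq_one x
  rw [rePart]
  nlinarith

theorem neg_one_le_rePart (x : unitary (Quaternion ℝ)) : -1 ≤ rePart x := by
  nlinarith [rePart_sq_le_one x]

theorem rePart_le_one (x : unitary (Quaternion ℝ)) : rePart x ≤ 1 := by
  nlinarith [rePart_sq_le_one x]

theorem rePart_eq_one_iff {x : unitary (Quaternion ℝ)} : rePart x = 1 ↔ x = 1 := by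
  refine ⟨fun h => ?_, fun h => h ▸ rePart_one⟩
  have h1 := normSq_eq_one x
  rw [rePart] at h
  rw [h] at h1
  have hI : (x : Quaternion ℝ).imI = 0 := by nlinarith
  have hJ : (x : Quaternion ℝ).imJ = 0 := by nlinarith
  have hK : (x : Quaternion ℝ).imK = 0 := by nlinarith
  apply Subtype.ext
  ext <;> simp [*]

theorem rePart_eq_neg_one_iff {x : unitary (Quaternion ℝ)} : rePart x = -1 ↔ x = -1 := by
  rw [← neg_eq_iff_eq_neg (a := x), ← rePart_eq_one_iff, rePart_neg]
  constructor <;> intro h <;> linarith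

/-- The real part of a commutator is close to `1` when one of the factors is close to `±1`. -/
theorem le_rePart_commutator (p b : unitary (Quaternion ℝ)) :
    1 - 2 * (1 - rePart p ^ 2) * (1 - rePart b ^ 2) ≤ rePart (p * b * p⁻¹ * b⁻¹) := by
  have hp := normSq_eq_one p
  have hb := normSq_eq_one b
  have key : rePart (p * b * p⁻¹ * b⁻¹) = 1 - 2 * (1 - rePart p ^ 2) * (1 - rePart b ^ 2) +
      2 * ((p : Quaternion ℝ).imI * (b : Quaternion ℝ).imI +
        (p : Quaternion ℝ).imJ * (b : Quaternion ℝ).imJ +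
        (p : Quaternion ℝ).imK * (b : Quaternion ℝ).imK) ^ 2 := by
    simp only [rePart, Submonoid.coe_mul, re_mul, imI_mul, imJ_mul, imK_mul, coe_inv_eq_star,
      re_star, imI_star, imJ_star, imK_star]
    generalize (p : Quaternion ℝ).re = p0 at *
    generalize (p : Quaternion ℝ).imI = p1 at *
    generalize (p : Quaternion ℝ).imJ = p2 at *
    generalize (p : Quaternion ℝ).imK = p3 at *
    generalize (b : Quaternion ℝ).re = b0 at *
    generalize (b : Quaternion ℝ).imI = b1 at *
    generalize (b : Quaternion ℝ).imJ = b2 at *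
    generalize (b : Quaternion ℝ).imK = b3 at *
    have e1 : p1 ^ 2 = 1 - p0 ^ 2 - p2 ^ 2 - p3 ^ 2 := by linarith
    have e2 : b1 ^ 2 = 1 - b0 ^ 2 - b2 ^ 2 - b3 ^ 2 := by linarith
    linear_combination (exp := 1) (b0 ^ 2 + b1 ^ 2 + b2 ^ 2 + b3 ^ 2) * hp + hb
      - 2 * (b1 ^ 2 + b2 ^ 2 + b3 ^ 2) * hp - 2 * (1 - p0 ^ 2) * hb
  rw [key]
  nlinarith [sq_nonneg ((p : Quaternion ℝ).imI * (b : Quaternion ℝ).imI +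
        (p : Quaternion ℝ).imJ * (b : Quaternion ℝ).imJ +
        (p : Quaternion ℝ).imK * (b : Quaternion ℝ).imK)]

/-- The unit complex number `exp (i α)` as a unit quaternion. -/
noncomputable def rotor (α : ℝ) : unitary (Quaternion ℝ) :=
  ⟨ofCoords (Real.cos α) (Real.sin α) 0 0, mem_unitary_of_normSq (by simp [normSq_def'])⟩

theorem rePart_rotor (α : ℝ) : rePart (rotor α) = Real.cos α := rfl

theorem rotor_add (α β : ℝ) : rotor (α + β) = rotor α * rotor β := by
  apply Subtype.ext
  ext <;> simp [rotor, Real.cos_add, Real.sin_add]; ring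

theorem rotor_zpow (α : ℝ) (k : ℤ) : rotor α ^ k = rotor (k * α) := by
  let f : Multiplicative ℝ →* unitary (Quaternion ℝ) :=
    MonoidHom.mk' (fun t => rotor t.toAdd) fun s t => rotor_add s.toAdd t.toAdd
  have := map_zpow f (Multiplicative.ofAdd α) k
  simpa [f] using this.symm

theorem exists_cos_sin_eq {x y : ℝ} (h : x ^ 2 + y ^ 2 = 1) :
    ∃ α : ℝ, Real.cos α = x ∧ Real.sin α = y := by
  have h1 : ‖(⟨x, y⟩ : ℂ)‖ = 1 := by
    rw [← sq_eq_sq₀ (norm_nonneg _) zero_le_one, Complex.sq_norm, Complex.normSq_mk]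
    linarith
  obtain ⟨α, hα⟩ := (Complex.norm_eq_one_iff _).1 h1
  refine ⟨α, ?_, ?_⟩
  · rw [← Complex.exp_ofReal_mul_I_re, hα]
  · rw [← Complex.exp_ofReal_mul_I_im, hα]

/-- A nonzero quaternion intertwining unit quaternions can be rescaled to a conjugating element. -/
theorem exists_unit_of_ne_zero {q : Quaternion ℝ} (hq : q ≠ 0) :
    ∃ g : unitary (Quaternion ℝ), ∀ a a' : unitary (Quaternion ℝ),
      q * a = a' * q → g * a * g⁻¹ = a' := by
  have hpos : 0 < normSq q := lt_of_le_of_ne normSq_nonneg (normSq_ne_zero.2 hq).symm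
  refine ⟨⟨(Real.sqrt (normSq q))⁻¹ • q, mem_unitary_of_normSq ?_⟩, fun a a' h => ?_⟩
  · rw [normSq_smul, inv_pow, Real.sq_sqrt hpos.le, inv_mul_cancel₀ hpos.ne']
  · rw [mul_inv_eq_iff_eq_mul]
    apply Subtype.ext
    simp [h]

theorem exists_conj_of_rePart_eq {a a' : unitary (Quaternion ℝ)} (h : rePart a = rePart a') :
    ∃ g, g * a * g⁻¹ = a' := by
  have ha := normSq_eq_one a
  have ha' := normSq_eq_one a'
  have key : ∀ y : Quaternion ℝ, ((a' : Quaternion ℝ) * y - y * star (a : Quaternion ℝ)) * a =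
      a' * ((a' : Quaternion ℝ) * y - y * star (a : Quaternion ℝ)) := by
    intro y
    have h1 : star (a : Quaternion ℝ) * a = 1 := (Unitary.mem_iff.1 a.2).1
    have h2 : (a' : Quaternion ℝ) * star (a' : Quaternion ℝ) = 1 := (Unitary.mem_iff.1 a'.2).2
    have h3 : (a : Quaternion ℝ) + star (a : Quaternion ℝ) =
        (a' : Quaternion ℝ) + star (a' : Quaternion ℝ) := by
      rw [self_add_star', self_add_star']
      simp only [rePart] at h
      rw [h]
    have h4 : ((a : Quaternion ℝ) + star (a : Quaternion ℝ)) * y =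
        y * ((a : Quaternion ℝ) + star (a : Quaternion ℝ)) := by
      rw [self_add_star']
      exact (coe_commutes _ _)
    have e1 : (a' : Quaternion ℝ) * y * ((a : Quaternion ℝ) + star (a : Quaternion ℝ)) =
        a' * ((a' : Quaternion ℝ) + star (a' : Quaternion ℝ)) * y := by
      rw [mul_assoc, ← h4, h3, mul_assoc]
    rw [mul_add, mul_add, h2, add_mul, one_mul] at e1
    have e2 : y * star (a : Quaternion ℝ) * a = y := by rw [mul_assoc, h1, mul_one]
    rw [sub_mul, mul_sub, e2]
    rw [mul_assoc, ← mul_assoc (a' : Quaternion ℝ) (a' : Quaternion ℝ), ← sub_eq_zero]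
    rw [← sub_eq_zero] at e1
    rw [← e1]
    noncomm_ring
  by_cases h0 : ∀ y : Quaternion ℝ, (a' : Quaternion ℝ) * y - y * star (a : Quaternion ℝ) = 0
  · have h1 := h0 1
    have hi := h0 (ofCoords 0 1 0 0)
    have hj := h0 (ofCoords 0 0 1 0)
    simp only [rePart] at h
    have e : a = a' := by
      simp only [Quaternion.ext_iff, re_sub, re_mul, imI_sub, imI_mul, imJ_sub, imJ_mul, imK_sub,
        imK_mul, re_star, imI_star, imJ_star, imK_star, re_zero, imI_zero, imJ_zero, imK_zero,
        re_one, imI_one, imJ_one, imK_one,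
        re_ofCoords, imI_ofCoords, imJ_ofCoords, imK_ofCoords] at h1 hi hj
      obtain ⟨h10, h11, h12, h13⟩ := h1
      obtain ⟨hi0, hi1, hi2, hi3⟩ := hi
      obtain ⟨hj0, hj1, hj2, hj3⟩ := hj
      apply Subtype.ext
      ext <;> linarith
    exact ⟨1, by simp [e]⟩
  · push Not at h0
    obtain ⟨y, hy⟩ := h0
    obtain ⟨g, hg⟩ := exists_unit_of_ne_zero hy
    exact ⟨g, hg _ _ (key y)⟩

theorem exists_intertwiner (α : ℝ) {u v : unitary (Quaternion ℝ)}
    (hu : (u : Quaternion ℝ).re = (v : Quaternion ℝ).re)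
    (hI : (u : Quaternion ℝ).imI = (v : Quaternion ℝ).imI) :
    ∃ q : Quaternion ℝ, q ≠ 0 ∧ q * (rotor α : Quaternion ℝ) = rotor α * q ∧
      q * (u : Quaternion ℝ) = v * q := by
  have hnu := normSq_eq_one u
  have hnv := normSq_eq_one v
  generalize hu2 : (u : Quaternion ℝ).imJ = y at *
  generalize hu3 : (u : Quaternion ℝ).imK = z at *
  generalize hv2 : (v : Quaternion ℝ).imJ = y' at *
  generalize hv3 : (v : Quaternion ℝ).imK = z' at *
  have hyz : y ^ 2 + z ^ 2 = y' ^ 2 + z' ^ 2 := by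
    rw [hu, hI] at hnu
    linarith
  by_cases hd : y' = -y ∧ z' = -z
  · refine ⟨ofCoords 0 1 0 0, fun h => by simpa using congrArg QuaternionAlgebra.imI h, ?_, ?_⟩
    · ext <;> simp [rotor]
    · ext <;> simp [hu, hI, hu2, hu3, hv2, hv3, hd.1, hd.2]
  · refine ⟨ofCoords (y' * y + z' * z + (y ^ 2 + z ^ 2)) (z' * y - y' * z) 0 0,
      fun h => hd ?_, ?_, ?_⟩
    · have h0 : y' * y + z' * z + (y ^ 2 + z ^ 2) = 0 := congrArg QuaternionAlgebra.re h
      have h1 : (y + y') ^ 2 + (z + z') ^ 2 = 0 := by linarith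
      have h2 : y + y' = 0 := by
        rw [← sq_eq_zero_iff]
        linarith [sq_nonneg (y + y'), sq_nonneg (z + z')]
      have h3 : z + z' = 0 := by
        rw [← sq_eq_zero_iff]
        linarith [sq_nonneg (y + y'), sq_nonneg (z + z')]
      constructor <;> linarith
    · ext <;> simp [rotor] <;> ring
    · ext <;> simp only [re_mul, imI_mul, imJ_mul, imK_mul, re_ofCoords, imI_ofCoords,
        imJ_ofCoords, imK_ofCoords, hu, hI, hu2, hu3, hv2, hv3]
      · ring
      · ring
      · linear_combination y * hyz
      · linear_combination z * hyz

/-- Two pairs of unit quaternions with the same traces are simultaneously conjugate. -/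
theorem exists_conj_pair {a b a' b' : unitary (Quaternion ℝ)} (ha : rePart a = rePart a')
    (hb : rePart b = rePart b') (hab : rePart (a * b) = rePart (a' * b')) :
    ∃ g, g * a * g⁻¹ = a' ∧ g * b * g⁻¹ = b' := by
  obtain ⟨α, hα, hα'⟩ := exists_cos_sin_eq (x := rePart a) (y := √(1 - rePart a ^ 2)) (by
    rw [Real.sq_sqrt (by linarith [rePart_sq_le_one a])]; ring)
  obtain ⟨g₁, h₁⟩ := exists_conj_of_rePart_eq (a := a) (a' := rotor α) (by rw [rePart_rotor, hα])
  obtain ⟨g₂, h₂⟩ := exists_conj_of_rePart_eq (a := a') (a' := rotor α)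
    (by rw [rePart_rotor, hα, ha])
  obtain ⟨g₃, h₃, h₄⟩ : ∃ g, g * rotor α * g⁻¹ = rotor α ∧
      g * (g₁ * b * g₁⁻¹) * g⁻¹ = g₂ * b' * g₂⁻¹ := by
    have hu : rePart (g₁ * b * g₁⁻¹) = rePart (g₂ * b' * g₂⁻¹) := by
      rw [rePart_conj, rePart_conj, hb]
    have hv : rePart (rotor α * (g₁ * b * g₁⁻¹)) = rePart (rotor α * (g₂ * b' * g₂⁻¹)) := by
      rw [← h₁]
      nth_rewrite 2 [h₁]
      rw [← h₂]
      simpa only [rePart_conj, ← mul_assoc, inv_mul_cancel_right] using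
        (by simpa only [mul_assoc, inv_mul_cancel_left] using
          ((rePart_conj g₁ (a * b)).trans hab).trans (rePart_conj g₂ (a' * b')).symm)
    generalize g₁ * b * g₁⁻¹ = u at *
    generalize g₂ * b' * g₂⁻¹ = v at *
    by_cases hs : Real.sin α = 0
    · have hr : ∀ g, g * rotor α * g⁻¹ = rotor α := by
        intro g
        rw [mul_inv_eq_iff_eq_mul]
        apply Subtype.ext
        ext <;> simp [rotor, hs, mul_comm]
      obtain ⟨g, hg⟩ := exists_conj_of_rePart_eq hu
      exact ⟨g, hr g, hg⟩
    · have hnu := normSq_eq_one u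
      have hnv := normSq_eq_one v
      have hI : (u : Quaternion ℝ).imI = (v : Quaternion ℝ).imI := by
        simp only [rePart, Submonoid.coe_mul, re_mul, rotor, re_ofCoords, imI_ofCoords,
          imJ_ofCoords, imK_ofCoords] at hu hv
        rw [hu] at hv
        exact mul_left_cancel₀ hs (by linarith)
      simp only [rePart] at hu
      obtain ⟨q, hq, h1, h2⟩ := exists_intertwiner α hu hI
      obtain ⟨g, hg⟩ := exists_unit_of_ne_zero hq
      exact ⟨g, hg _ _ h1, hg _ _ h2⟩
  refine ⟨g₂⁻¹ * g₃ * g₁, ?_, ?_⟩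
  · calc _ = g₂⁻¹ * (g₃ * (g₁ * a * g₁⁻¹) * g₃⁻¹) * g₂ := by group
      _ = a' := by rw [h₁, h₃, ← h₂]; group
  · calc _ = g₂⁻¹ * (g₃ * (g₁ * b * g₁⁻¹) * g₃⁻¹) * g₂ := by group
      _ = b' := by rw [h₄]; group

/-- If `a` is a rotation by `θ`, every element commuting with `a` is within `θ / 2` of a power
of `a`. -/
theorem exists_zpow_mul_rePart {a q : unitary (Quaternion ℝ)} {θ : ℝ} (hθ : 0 < θ)
    (hθπ : θ < Real.pi) (ha : rePart a = Real.cos θ) (hq : Commute a q) :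
    ∃ k : ℤ, Real.cos (θ / 2) ≤ rePart (a ^ k * q) := by
  obtain ⟨g, hg⟩ := exists_conj_of_rePart_eq (a := a) (a' := rotor θ) (by rw [rePart_rotor, ha])
  have hs := Real.sin_pos_of_pos_of_lt_pi hθ hθπ
  obtain ⟨α, hα⟩ : ∃ α, g * q * g⁻¹ = rotor α := by
    have hc : Commute (rotor θ) (g * q * g⁻¹) := by
      rw [← hg]
      exact (Commute.conj_iff g).2 hq
    have hn := normSq_eq_one (g * q * g⁻¹)
    generalize g * q * g⁻¹ = u at *
    have hc' : (rotor θ : Quaternion ℝ) * u = u * rotor θ := congrArg Subtype.val hc.eq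
    simp only [Quaternion.ext_iff, re_mul, imI_mul, imJ_mul, imK_mul, rotor, re_ofCoords, imI_ofCoords,
      imJ_ofCoords, imK_ofCoords] at hc'
    obtain ⟨-, -, h2, h3⟩ := hc'
    have hJ : (u : Quaternion ℝ).imJ = 0 := mul_left_cancel₀ hs.ne' (by linarith)
    have hK : (u : Quaternion ℝ).imK = 0 := mul_left_cancel₀ hs.ne' (by linarith)
    obtain ⟨α, h1, h2⟩ := exists_cos_sin_eq (x := (u : Quaternion ℝ).re)
      (y := (u : Quaternion ℝ).imI) (by rw [hJ, hK] at hn; linarith)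
    refine ⟨α, Subtype.ext ?_⟩
    ext <;> simp [rotor, *]
  refine ⟨round (-α / θ), ?_⟩
  set k := round (-α / θ) with hk
  have h1 : g * (a ^ k * q) * g⁻¹ = rotor (k * θ + α) := by
    rw [rotor_add, ← rotor_zpow, ← hg, conj_zpow, ← hα]
    group
  rw [← rePart_conj g, h1, rePart_rotor, ← Real.cos_abs (_ + _)]
  apply Real.cos_le_cos_of_nonneg_of_le_pi (abs_nonneg _) (by linarith)
  have h2 := abs_sub_round (-α / θ)
  rw [← hk] at h2
  have h3 : k * θ + α = -((-α / θ - k) * θ) := by field_simp; ring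
  rw [h3, abs_neg, abs_mul, abs_of_pos hθ]
  nlinarith

theorem rePart_zpow {a : unitary (Quaternion ℝ)} {θ : ℝ} (ha : rePart a = Real.cos θ) (k : ℤ) :
    rePart (a ^ k) = Real.cos (k * θ) := by
  obtain ⟨g, hg⟩ := exists_conj_of_rePart_eq (a := a) (a' := rotor θ) (by rw [rePart_rotor, ha])
  rw [← rePart_conj g, ← conj_zpow, hg, rotor_zpow, rePart_rotor]

theorem eq_or_eq_inv_of_commute {x y : unitary (Quaternion ℝ)} (h : Commute x y)
    (hre : rePart x = rePart y) : y = x ∨ y = x⁻¹ := by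
  have hxy : (x : Quaternion ℝ) * y = y * x := congrArg Subtype.val h.eq
  have hx : (x : Quaternion ℝ) * star (x : Quaternion ℝ) = 1 := (Unitary.mem_iff.1 x.2).2
  have hy : (y : Quaternion ℝ) * star (y : Quaternion ℝ) = 1 := (Unitary.mem_iff.1 y.2).2
  have hs : (x : Quaternion ℝ) + star (x : Quaternion ℝ) = y + star (y : Quaternion ℝ) := by
    rw [self_add_star', self_add_star', show (x : Quaternion ℝ).re = (y : Quaternion ℝ).re from hre]
  have key : ((y : Quaternion ℝ) - x) * (y - star (x : Quaternion ℝ)) = 0 := by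
    calc ((y : Quaternion ℝ) - x) * (y - star (x : Quaternion ℝ))
        = y * y - (y * star (x : Quaternion ℝ) + x * y) + x * star (x : Quaternion ℝ) := by
          noncomm_ring
      _ = y * y - y * (x + star (x : Quaternion ℝ)) + y * star (y : Quaternion ℝ) := by
          rw [hx, hy, hxy]; noncomm_ring
      _ = 0 := by rw [hs]; noncomm_ring
  rcases mul_eq_zero.1 key with h | h
  · exact Or.inl (Subtype.ext (sub_eq_zero.1 h))
  · exact Or.inr (Subtype.ext (by rw [coe_inv_eq_star]; exact sub_eq_zero.1 h))

theorem rePart_eq_zero_of_conj_eq_inv {g a : unitary (Quaternion ℝ)} (h : g * a * g⁻¹ = a⁻¹)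
    (hn : ¬ Commute g a) : rePart g = 0 := by
  rw [mul_inv_eq_iff_eq_mul] at h
  have h' := congrArg Subtype.val h
  simp only [Submonoid.coe_mul, coe_inv_eq_star, Quaternion.ext_iff, re_mul, imI_mul, imJ_mul,
    imK_mul, re_star, imI_star, imJ_star, imK_star] at h'
  obtain ⟨h0, h1, h2, h3⟩ := h'
  by_contra hg
  rw [rePart] at hg
  have e1 : (a : Quaternion ℝ).imI = 0 := mul_left_cancel₀ hg (by linarith)
  have e2 : (a : Quaternion ℝ).imJ = 0 := mul_left_cancel₀ hg (by linarith)
  have e3 : (a : Quaternion ℝ).imK = 0 := mul_left_cancel₀ hg (by linarith)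
  have ea : a⁻¹ = a := by
    apply Subtype.ext
    rw [coe_inv_eq_star]
    ext <;> simp [e1, e2, e3]
  rw [ea] at h
  exact hn h

theorem rePart_conj_mul (x b : unitary (Quaternion ℝ)) :
    rePart (x * b * x⁻¹ * b) = 2 * rePart (x * b) * rePart (x⁻¹ * b) - rePart (x * x) := by
  have h := rePart_mul_add (x * b) (x⁻¹ * b)
  have e : rePart ((x * b)⁻¹ * (x⁻¹ * b)) = rePart (x * x) := by
    rw [← rePart_inv (x * x), ← rePart_conj b⁻¹ (x * x)⁻¹]
    congr 1
    group
  rw [e] at h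
  rw [← h]
  simp only [mul_assoc]
  ring

theorem rePart_commutator (x b : unitary (Quaternion ℝ)) :
    rePart (x * b * x⁻¹ * b⁻¹) = 2 * rePart b ^ 2 - rePart (x * b * x⁻¹ * b) := by
  have h := rePart_mul_add b (x * b * x⁻¹)
  rw [rePart_conj, rePart_mul_comm, rePart_mul_comm b⁻¹] at h
  linarith

theorem rePart_mul_inv (x y : unitary (Quaternion ℝ)) :
    rePart (x * y⁻¹) = 2 * rePart x * rePart y - rePart (x * y) := by
  rw [← rePart_mul_add x y, ← rePart_inv (x * y⁻¹), mul_inv_rev, inv_inv, rePart_mul_comm y]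
  ring

theorem rePart_sq_mul (x y : unitary (Quaternion ℝ)) :
    rePart (x * x * y) = 2 * rePart x * rePart (x * y) - rePart y := by
  rw [← rePart_mul_add x (x * y), inv_mul_cancel_left, mul_assoc]
  ring

theorem rePart_inv_sq_mul (x y : unitary (Quaternion ℝ)) :
    rePart ((x * x)⁻¹ * y) = 2 * rePart x * rePart (x⁻¹ * y) - rePart y := by
  rw [mul_inv_rev, rePart_sq_mul, rePart_inv]

section Gap

variable {Γ : Subgroup (unitary (Quaternion ℝ))} {c : ℝ} {a b s : unitary (Quaternion ℝ)}

theorem rePart_le_or_eq_one (hmax : ∀ x ∈ Γ, c < rePart x → x = 1) (ha : a ∈ Γ) :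
    rePart a ≤ c ∨ rePart a = 1 := by
  by_cases h : c < rePart a
  · exact Or.inr (rePart_eq_one_iff.2 (hmax a ha h))
  · exact Or.inl (not_lt.1 h)

theorem cos_arccos_half_sq (hc : -1 < c) (hc1 : c < 1) :
    Real.cos (Real.arccos c / 2) ^ 2 = (1 + c) / 2 := by
  rw [Real.cos_sq, mul_div_cancel₀ _ two_ne_zero, Real.cos_arccos hc.le hc1.le]
  ring

theorem mem_zpowers_of_commute (hmax : ∀ x ∈ Γ, c < rePart x → x = 1) (hc : -1 < c) (hc1 : c < 1)
    (ha : a ∈ Γ) (hac : rePart a = c) {q : unitary (Quaternion ℝ)} (hq : q ∈ Γ)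
    (hcomm : Commute a q) : q ∈ Subgroup.zpowers a := by
  have hcos := Real.cos_arccos hc.le hc1.le
  have h0 : 0 < Real.arccos c := Real.arccos_pos.2 hc1
  have hpi : Real.arccos c < Real.pi := by
    rw [← Real.arccos_neg_one]
    exact Real.arccos_lt_arccos le_rfl hc hc1.le
  obtain ⟨k, hk⟩ := exists_zpow_mul_rePart h0 hpi (hac.trans hcos.symm) hcomm
  have hlt : c < Real.cos (Real.arccos c / 2) := by
    conv_lhs => rw [← hcos]
    exact Real.cos_lt_cos_of_nonneg_of_le_pi (by linarith) hpi.le (by linarith)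
  have h1 := hmax _ (Γ.mul_mem (Γ.zpow_mem ha k) hq) (hlt.trans_le hk)
  exact ⟨-k, by simpa using (eq_inv_of_mul_eq_one_right h1).symm⟩

/-- If the real parts of the nontrivial elements are at most `c`, an element with real part `c`
commutes with anything which is close enough to `± 1`. -/
theorem commutator_eq_one (hmax : ∀ x ∈ Γ, c < rePart x → x = 1) (hc : 0 < c) (hc1 : c < 1)
    (hbc : rePart b = c) {p : unitary (Quaternion ℝ)} (hp : (1 + c) / 2 ≤ rePart p ^ 2)
    (hmem : p * b * p⁻¹ * b⁻¹ ∈ Γ) : p * b * p⁻¹ = b := by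
  have h := le_rePart_commutator p b
  rw [hbc] at h
  refine mul_inv_eq_one.1 (hmax _ hmem (lt_of_lt_of_le ?_ h))
  have h1 : (1 - rePart p ^ 2) * (1 - c ^ 2) ≤ (1 - c) / 2 * (1 - c ^ 2) :=
    mul_le_mul_of_nonneg_right (by linarith) (by nlinarith)
  have h2 : 0 < (1 - c) * c ^ 2 := mul_pos (by linarith) (by positivity)
  nlinarith

theorem exists_zpow_conj (hmax : ∀ x ∈ Γ, c < rePart x → x = 1) (hc : 0 < c) (hc1 : c < 1)
    (ha : a ∈ Γ) (hb : b ∈ Γ) (hs : s ∈ Γ) (hac : rePart a = c) (hbc : rePart b = c)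
    (hsc : rePart s = c) (h : rePart (a * b) = rePart (a * s)) :
    ∃ k : ℤ, s = a ^ k * b * (a ^ k)⁻¹ := by
  obtain ⟨q, hqa, hqb⟩ := exists_conj_pair rfl (hbc.trans hsc.symm) h
  have hcomm : Commute a q := (mul_inv_eq_iff_eq_mul.1 hqa).symm
  have hcos := Real.cos_arccos (by linarith : -1 ≤ c) hc1.le
  have hpi : Real.arccos c < Real.pi := by
    rw [← Real.arccos_neg_one]
    exact Real.arccos_lt_arccos le_rfl (by linarith) hc1.le
  obtain ⟨k, hk⟩ := exists_zpow_mul_rePart (Real.arccos_pos.2 hc1) hpi (hac.trans hcos.symm) hcomm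
  have hpb : a ^ k * q * b * (a ^ k * q)⁻¹ = a ^ k * s * (a ^ k)⁻¹ := by
    rw [← hqb]; group
  have h1 : a ^ k * q * b * (a ^ k * q)⁻¹ = b := by
    apply commutator_eq_one hmax hc hc1 hbc
    · rw [← cos_arccos_half_sq (by linarith) hc1]
      exact pow_le_pow_left₀ (Real.cos_nonneg_of_mem_Icc
        ⟨by linarith [Real.arccos_nonneg c, Real.pi_pos], by linarith⟩) hk 2
    · rw [hpb]
      exact Γ.mul_mem (Γ.mul_mem (Γ.mul_mem (Γ.zpow_mem ha k) hs) (Γ.inv_mem (Γ.zpow_mem ha k)))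
        (Γ.inv_mem hb)
  refine ⟨-k, ?_⟩
  rw [← h1, hpb]
  group

theorem exists_nat_mul_arccos (hmax : ∀ x ∈ Γ, c < rePart x → x = 1) (hc : 0 < c) (hc1 : c < 1)
    (ha : a ∈ Γ) (hac : rePart a = c) : ∃ m : ℕ, m * Real.arccos c = 2 * Real.pi ∧ a ^ m = 1 := by
  have hcos := Real.cos_arccos (by linarith : -1 ≤ c) hc1.le
  have hpos : 0 < Real.arccos c := Real.arccos_pos.2 hc1
  have hpi := Real.arccos_le_pi c
  set θ := Real.arccos c
  set m := ⌊2 * Real.pi / θ⌋₊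
  have h1 : m * θ ≤ 2 * Real.pi := by
    rw [← le_div_iff₀ hpos]
    exact Nat.floor_le (by positivity)
  have h2 : 2 * Real.pi < (m + 1) * θ := by
    rw [← div_lt_iff₀ hpos]
    exact Nat.lt_floor_add_one _
  have h3 : rePart (a ^ m) = Real.cos (2 * Real.pi - m * θ) := by
    have := rePart_zpow (hac.trans hcos.symm) m
    rw [zpow_natCast] at this
    rw [this, Real.cos_two_pi_sub]
    simp
  have h4 : a ^ m = 1 := by
    apply hmax _ (Γ.pow_mem ha m)
    rw [h3]
    conv_lhs => rw [← hcos]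
    exact Real.cos_lt_cos_of_nonneg_of_le_pi (by linarith) hpi (by linarith)
  refine ⟨m, ?_, h4⟩
  rw [h4, rePart_one] at h3
  have h5 := (Real.cos_eq_one_iff_of_lt_of_lt (by linarith) (by linarith)).1 h3.symm
  linarith

theorem neg_one_mem_and_eq (hmax : ∀ x ∈ Γ, c < rePart x → x = 1) (hc : 0 < c) (hc1 : c < 1)
    (ha : a ∈ Γ) (hb : b ∈ Γ) (hac : rePart a = c) (hbc : rePart b = c) (hab : ¬ Commute a b) :
    -1 ∈ Γ ∧ (c = 1 / 2 ∨ 2 * c ^ 2 = 1 ∨ c = (1 + √5) / 4) := by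
  have hcos := Real.cos_arccos (by linarith : -1 ≤ c) hc1.le
  have hpos : 0 < Real.arccos c := Real.arccos_pos.2 hc1
  have hlt : Real.arccos c < Real.pi / 2 := Real.arccos_lt_pi_div_two.2 hc
  have hsq := cos_arccos_half_sq (by linarith) hc1
  obtain ⟨m, hm, ham⟩ := exists_nat_mul_arccos hmax hc hc1 ha hac
  have hpow : ∀ n : ℕ, rePart (a ^ n) = Real.cos (n * Real.arccos c) := fun n => by
    simpa using rePart_zpow (hac.trans hcos.symm) n
  set θ := Real.arccos c
  obtain ⟨n, rfl | rfl⟩ := Nat.even_or_odd' m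
  · have hn : n * θ = Real.pi := by
      push_cast at hm
      linarith
    have hneg : a ^ n = -1 := by
      rw [← rePart_eq_neg_one_iff, hpow, hn, Real.cos_pi]
    refine ⟨hneg ▸ Γ.pow_mem ha n, ?_⟩
    have hn3 : 2 < n := by
      by_contra! hle
      have : (n : ℝ) ≤ 2 := by exact_mod_cast hle
      nlinarith
    have hθ : θ = Real.pi / n := by
      rw [← hn]
      field_simp
    have hn6 : n < 6 := by
      by_contra! hle
      have h6 : (6 : ℝ) ≤ n := by exact_mod_cast hle
      have hc6 : √3 / 2 ≤ c := by
        rw [← Real.cos_pi_div_six, ← hcos]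
        exact Real.cos_le_cos_of_nonneg_of_le_pi hpos.le (by linarith [Real.pi_pos]) (by nlinarith)
      have hc2 : 3 / 4 ≤ c ^ 2 := by
        have := pow_le_pow_left₀ (by positivity) hc6 2
        rw [div_pow, Real.sq_sqrt (by norm_num)] at this
        linarith
      refine hab (mul_inv_eq_iff_eq_mul.1 (mul_inv_eq_one.1 (hmax _ (Γ.mul_mem (Γ.mul_mem
        (Γ.mul_mem ha hb) (Γ.inv_mem ha)) (Γ.inv_mem hb))
        (lt_of_lt_of_le ?_ (le_rePart_commutator a b)))))
      rw [hac, hbc]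
      have e1 : (1 - c ^ 2) * (1 + c) < 1 / 2 := by nlinarith
      nlinarith
    interval_cases n
    · left
      rw [← hcos, hθ]
      exact_mod_cast Real.cos_pi_div_three
    · right; left
      rw [← hcos, hθ]
      push_cast
      rw [Real.cos_pi_div_four, div_pow, Real.sq_sqrt (by norm_num)]
      norm_num
    · right; right
      rw [← hcos, hθ]
      exact_mod_cast Real.cos_pi_div_five
  · have hn : (n : ℝ) * θ = Real.pi - θ / 2 := by
      push_cast at hm
      linarith
    refine absurd ?_ hab
    have h1 : a ^ n * b * (a ^ n)⁻¹ = b := by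
      apply commutator_eq_one hmax hc hc1 hbc
      · rw [hpow, hn, Real.cos_pi_sub, neg_sq, hsq]
      · exact Γ.mul_mem (Γ.mul_mem (Γ.mul_mem (Γ.pow_mem ha n) hb) (Γ.inv_mem (Γ.pow_mem ha n)))
          (Γ.inv_mem hb)
    have h2 : Commute (a ^ n) b := mul_inv_eq_iff_eq_mul.1 h1
    have h3 : a = ((a ^ n) ^ 2)⁻¹ := by
      rw [eq_inv_iff_mul_eq_one, ← pow_mul, ← pow_succ', mul_comm n 2, ham]
    rw [h3]
    exact (h2.pow_left 2).inv_left

/-- The possible inner products between elements of maximal real part. -/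
theorem rePart_mul_of_not_commute (hmax : ∀ x ∈ Γ, c < rePart x → x = 1) (hc : 0 < c) (hc1 : c < 1)
    (ha : a ∈ Γ) (hb : b ∈ Γ) (hac : rePart a = c) (hbc : rePart b = c) (hab : ¬ Commute a b) :
    if 2 * c ^ 2 = 1 then rePart (a * b) = c ^ 2
    else rePart (a * b) = c ∨ rePart (a * b⁻¹) = c := by
  obtain ⟨-, hcase⟩ := neg_one_mem_and_eq hmax hc hc1 ha hb hac hbc hab
  have hinv : rePart (a⁻¹ * b) = 2 * c ^ 2 - rePart (a * b) := by
    rw [eq_sub_iff_add_eq', rePart_mul_add, hac, hbc]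
    ring
  have hle : rePart (a * b) ≤ c := by
    by_contra! h
    have := hmax _ (Γ.mul_mem ha hb) h
    rw [eq_inv_of_mul_eq_one_left this] at hab
    exact hab (Commute.refl b).inv_left
  have hle' : 2 * c ^ 2 - rePart (a * b) ≤ c := by
    rw [← hinv]
    by_contra! h
    have := hmax _ (Γ.mul_mem (Γ.inv_mem ha) hb) h
    rw [inv_mul_eq_one.1 this] at hab
    exact hab (Commute.refl b)
  have h1 := rePart_le_or_eq_one hmax
    (Γ.mul_mem (Γ.mul_mem (Γ.mul_mem ha hb) (Γ.inv_mem ha)) hb)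
  have ha2 := Γ.mul_mem ha ha
  have h2 := rePart_le_or_eq_one hmax
    (Γ.mul_mem (Γ.mul_mem (Γ.mul_mem ha2 hb) (Γ.inv_mem ha2)) hb)
  rw [rePart_conj_mul, rePart_mul_self, hinv, hac] at h1
  rw [rePart_conj_mul, rePart_mul_self, rePart_mul_self, hac, rePart_sq_mul, rePart_inv_sq_mul,
    hinv, hac, hbc] at h2
  rw [rePart_mul_inv, hac, hbc]
  generalize rePart (a * b) = τ at *
  obtain ⟨d, rfl⟩ : ∃ d, τ = c ^ 2 + d := ⟨τ - c ^ 2, by ring⟩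
  have hsq : d ^ 2 ≤ (c - c ^ 2) ^ 2 := sq_le_sq' (by linarith) (by linarith)
  have hfinish : (c - c ^ 2) ^ 2 ≤ d ^ 2 → c ^ 2 + d = c ∨ 2 * c * c - (c ^ 2 + d) = c := by
    intro h
    rcases sq_eq_sq_iff_eq_or_eq_neg.1 (le_antisymm hsq h) with h | h
    · left; linarith
    · right; linarith
  rcases hcase with hc | hc | hc
  · rw [if_neg (by rw [hc]; norm_num)]
    apply hfinish
    subst hc
    rcases h1 with h1 | h1 <;> nlinarith
  · rw [if_pos hc]
    have h4 : 2 * (2 * c * (c ^ 2 + d) - c) * (2 * c * (2 * c ^ 2 - (c ^ 2 + d)) - c) -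
        (2 * (2 * c ^ 2 - 1) ^ 2 - 1) = 1 - 4 * d ^ 2 := by
      linear_combination ((2 * c ^ 2 - 1) * (2 * c ^ 2 - 2) - 4 * d ^ 2) * hc
    rw [h4] at h2
    have hd : d ^ 2 = 0 := by
      rcases h2 with h2 | h2
      · have hc' : 1 / 2 < c := by nlinarith
        have hc'' : c < 3 / 4 := by nlinarith
        have h3 : d ^ 2 ≤ (1 / 4) ^ 2 := hsq.trans (pow_le_pow_left₀ (by nlinarith) (by linarith) 2)
        linarith
      · linarith
    rw [pow_eq_zero_iff two_ne_zero] at hd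
    rw [hd, add_zero]
  · have h5 : √5 ^ 2 = 5 := Real.sq_sqrt (by norm_num)
    have hq : 4 * c ^ 2 = 2 * c + 1 := by rw [hc]; nlinarith
    rw [if_neg (fun h => by nlinarith)]
    apply hfinish
    have he : 2 * c ^ 2 - 1 = c - 1 / 2 := by linarith
    have hd0 : c - c ^ 2 = (c - 1 / 2) / 2 := by linarith
    have h4 : 2 * (2 * c * (c ^ 2 + d) - c) * (2 * c * (2 * c ^ 2 - (c ^ 2 + d)) - c) -
        (2 * (2 * c ^ 2 - 1) ^ 2 - 1) = c + 8 * c ^ 2 * ((c - c ^ 2) ^ 2 - d ^ 2) := by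
      have h6 : 2 * (2 * c * (c ^ 2 + d) - c) * (2 * c * (2 * c ^ 2 - (c ^ 2 + d)) - c) =
          2 * c ^ 2 * ((2 * c ^ 2 - 1) ^ 2 - 4 * d ^ 2) := by ring
      rw [h6, he, hd0]
      linear_combination (-1 / 2) * hq
    rw [h4] at h2
    have hc8 : 0 < 8 * c ^ 2 := by positivity
    rcases h2 with h2 | h2
    · by_contra! h
      have := mul_pos hc8 (sub_pos.2 h)
      linarith
    · have hc45 : c < 41 / 50 := by nlinarith
      have h6 : 8 * c ^ 2 * (c - c ^ 2) ^ 2 < 1 - c := by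
        have h7 : (c - c ^ 2) ^ 2 ≤ (1 / 6) ^ 2 :=
          pow_le_pow_left₀ (by nlinarith) (by linarith) 2
        nlinarith
      nlinarith [mul_nonneg hc8.le (sq_nonneg d)]

end Gap

/-- `t` is a conjugate of `s` by an element of `H`. -/
def IsConjBy {G : Type*} [Group G] (H : Subgroup G) (s t : G) : Prop := ∃ h ∈ H, h * s * h⁻¹ = t

namespace IsConjBy

variable {G : Type*} [Group G] {H : Subgroup G} {s t u : G}

theorem symm (h : IsConjBy H s t) : IsConjBy H t s := by
  obtain ⟨x, hx, rfl⟩ := h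
  exact ⟨x⁻¹, H.inv_mem hx, by group⟩

theorem trans (h : IsConjBy H s t) (h' : IsConjBy H t u) : IsConjBy H s u := by
  obtain ⟨x, hx, rfl⟩ := h
  obtain ⟨y, hy, rfl⟩ := h'
  exact ⟨y * x, H.mul_mem hy hx, by group⟩

theorem inv (h : IsConjBy H s t) : IsConjBy H s⁻¹ t⁻¹ := by
  obtain ⟨x, hx, rfl⟩ := h
  exact ⟨x, hx, by group⟩

end IsConjBy

open Classical in
/-- The inner product of two suitably chosen non-commuting elements of real part `c`, where `c` is
the largest real part of a nontrivial element of a finite group of unit quaternions. -/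
noncomputable def generatorRePart (c : ℝ) : ℝ := if 2 * c ^ 2 = 1 then c ^ 2 else c

section Gap

variable {Γ H : Subgroup (unitary (Quaternion ℝ))} {c : ℝ} {a b s : unitary (Quaternion ℝ)}

theorem rePart_mul_eq_generatorRePart (hmax : ∀ x ∈ Γ, c < rePart x → x = 1) (hc : 0 < c)
    (hc1 : c < 1) (ha : a ∈ Γ) (hb : b ∈ Γ) (hac : rePart a = c) (hbc : rePart b = c)
    (hab : ¬ Commute a b) :
    rePart (a * b) = generatorRePart c ∨ rePart (a * b⁻¹) = generatorRePart c := by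
  have h := rePart_mul_of_not_commute hmax hc hc1 ha hb hac hbc hab
  unfold generatorRePart
  split_ifs at h ⊢
  · exact Or.inl h
  · exact h

theorem isConjBy_of_rePart_mul_eq (hmax : ∀ x ∈ Γ, c < rePart x → x = 1) (hc : 0 < c)
    (hc1 : c < 1) (ha : a ∈ Γ) (hb : b ∈ Γ) (hs : s ∈ Γ) (hac : rePart a = c) (hbc : rePart b = c)
    (hsc : rePart s = c) (haH : a ∈ H) (h : rePart (a * b) = rePart (a * s)) :
    IsConjBy H b s := by
  obtain ⟨k, rfl⟩ := exists_zpow_conj hmax hc hc1 ha hb hs hac hbc hsc h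
  exact ⟨a ^ k, H.zpow_mem haH k, rfl⟩

theorem not_commute_conj (hc : 0 < c) (hac : rePart a = c) (hab : ¬ Commute a b) :
    ¬ Commute b (a * b * a⁻¹) := by
  intro h
  rcases eq_or_eq_inv_of_commute h (rePart_conj a b).symm with h | h
  · exact hab (mul_inv_eq_iff_eq_mul.1 h)
  · have := rePart_eq_zero_of_conj_eq_inv h hab
    linarith

theorem isConjBy_or_isConjBy_inv (hmax : ∀ x ∈ Γ, c < rePart x → x = 1) (hc : 0 < c)
    (hc1 : c < 1) (ha : a ∈ Γ) (hb : b ∈ Γ) (hac : rePart a = c) (hbc : rePart b = c)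
    (hab : ¬ Commute a b) (h : rePart (a * b) = generatorRePart c) (haH : a ∈ H) (hbH : b ∈ H) :
    IsConjBy H b a ∨ IsConjBy H b a⁻¹ := by
  have h1 : IsConjBy H b (a * b * a⁻¹) := ⟨a, haH, rfl⟩
  have hb1 := Γ.mul_mem (Γ.mul_mem ha hb) (Γ.inv_mem ha)
  have hbc1 : rePart (a * b * a⁻¹) = c := (rePart_conj a b).trans hbc
  rw [rePart_mul_comm] at h
  rcases rePart_mul_eq_generatorRePart hmax hc hc1 hb hb1 hbc hbc1
    (not_commute_conj hc hac hab) with h2 | h2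
  · exact Or.inl (h1.trans
      (isConjBy_of_rePart_mul_eq hmax hc hc1 hb hb1 ha hbc hbc1 hac hbH (h2.trans h.symm)))
  · right
    have := isConjBy_of_rePart_mul_eq hmax hc hc1 hb (Γ.inv_mem hb1) ha hbc
      ((rePart_inv _).trans hbc1) hac hbH (h2.trans h.symm)
    simpa using (h1.inv.trans this).inv

theorem isConjBy_or_isConjBy_inv_of_rePart_eq (hmax : ∀ x ∈ Γ, c < rePart x → x = 1) (hc : 0 < c)
    (hc1 : c < 1) (ha : a ∈ Γ) (hb : b ∈ Γ) (hac : rePart a = c) (hbc : rePart b = c)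
    (hab : ¬ Commute a b) (h : rePart (a * b) = generatorRePart c) (haH : a ∈ H) (hbH : b ∈ H)
    (hs : s ∈ Γ) (hsc : rePart s = c) : IsConjBy H s a ∨ IsConjBy H s a⁻¹ := by
  have key := isConjBy_or_isConjBy_inv hmax hc hc1 ha hb hac hbc hab h haH hbH
  by_cases has : Commute a s
  · rcases eq_or_eq_inv_of_commute has (hac.trans hsc.symm) with rfl | rfl
    · exact Or.inl ⟨1, H.one_mem, by simp⟩
    · exact Or.inr ⟨1, H.one_mem, by simp⟩
  rcases rePart_mul_eq_generatorRePart hmax hc hc1 ha hs hac hsc has with h2 | h2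
  · have := isConjBy_of_rePart_mul_eq hmax hc hc1 ha hs hb hac hsc hbc haH (h2.trans h.symm)
    exact key.imp this.trans this.trans
  · have := isConjBy_of_rePart_mul_eq hmax hc hc1 ha (Γ.inv_mem hs) hb hac
      ((rePart_inv _).trans hsc) hbc haH (h2.trans h.symm)
    rcases key with h3 | h3
    · exact Or.inr (by simpa using (this.trans h3).inv)
    · exact Or.inl (by simpa using (this.trans h3).inv)

theorem isConjBy_inv_self (hmax : ∀ x ∈ Γ, c < rePart x → x = 1) (hc : 0 < c)
    (hc1 : c < 1) (ha : a ∈ Γ) (hb : b ∈ Γ) (hac : rePart a = c) (hbc : rePart b = c)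
    (hab : ¬ Commute a b) (h : rePart (a * b) = generatorRePart c) (haH : a ∈ H) (hbH : b ∈ H)
    (hne : c ≠ 1 / 2) : IsConjBy H a a⁻¹ := by
  have key := isConjBy_or_isConjBy_inv hmax hc hc1 ha hb hac hbc hab h haH hbH
  have hinv : rePart (a⁻¹ * b) = 2 * c ^ 2 - rePart (a * b) := by
    rw [eq_sub_iff_add_eq', rePart_mul_add, hac, hbc]
    ring
  unfold generatorRePart at h
  rcases (neg_one_mem_and_eq hmax hc hc1 ha hb hac hbc hab).2 with h' | h' | h'
  · exact absurd h' hne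
  · rw [if_pos h'] at h
    have h2 : IsConjBy H b b⁻¹ := by
      refine isConjBy_of_rePart_mul_eq hmax hc hc1 ha hb (Γ.inv_mem hb) hac hbc
        ((rePart_inv b).trans hbc) haH ?_
      rw [rePart_mul_inv, h, hac, hbc]
      ring
    rcases key with h3 | h3
    · exact h3.symm.trans (h2.trans h3.inv)
    · simpa using (h3.symm.trans (h2.trans h3.inv)).inv
  · have h5 : √5 ^ 2 = 5 := Real.sq_sqrt (by norm_num)
    have hq : 4 * c ^ 2 = 2 * c + 1 := by rw [h']; nlinarith
    rw [if_neg (fun h => by nlinarith)] at h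
    have e1 : rePart (b * (a * b * a⁻¹)⁻¹) = c := by
      rw [← rePart_inv, mul_inv_rev, inv_inv, rePart_commutator, rePart_conj_mul, rePart_mul_self,
        hinv, h, hac, hbc]
      linear_combination (-c + 3 / 2 - 1 / 2) * hq
    have e2 : rePart (b * (a * a * b * (a * a)⁻¹)) = c := by
      rw [rePart_mul_comm, rePart_conj_mul, rePart_mul_self, rePart_mul_self, rePart_sq_mul,
        rePart_inv_sq_mul, hinv, h, hac, hbc]
      have : 2 * c * (2 * c ^ 2 - c) - c = 0 := by linear_combination c * hq
      rw [this]
      have e : 2 * c ^ 2 - 1 = c - 1 / 2 := by linarith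
      rw [e]
      linear_combination (-1 / 2) * hq
    rw [rePart_mul_comm] at h
    have hb1 := Γ.inv_mem (Γ.mul_mem (Γ.mul_mem ha hb) (Γ.inv_mem ha))
    have ha2 := Γ.mul_mem ha ha
    have hb2 := Γ.mul_mem (Γ.mul_mem ha2 hb) (Γ.inv_mem ha2)
    have h1 : IsConjBy H a (a * b * a⁻¹)⁻¹ := isConjBy_of_rePart_mul_eq hmax hc hc1 hb ha hb1 hbc
      hac ((rePart_inv _).trans ((rePart_conj a b).trans hbc)) hbH (h.trans e1.symm)
    have h2 : IsConjBy H a (a * a * b * (a * a)⁻¹) := isConjBy_of_rePart_mul_eq hmax hc hc1 hb ha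
      hb2 hbc hac ((rePart_conj _ b).trans hbc) hbH (h.trans e2.symm)
    have h3 : IsConjBy H b (a * b * a⁻¹) := ⟨a, haH, rfl⟩
    have h4 : IsConjBy H b (a * a * b * (a * a)⁻¹) := ⟨a * a, H.mul_mem haH haH, rfl⟩
    exact h1.trans (h3.inv.symm.trans (h2.trans h4.symm).symm.inv)

theorem conj_ne_inv (hmax : ∀ x ∈ Γ, c < rePart x → x = 1) (hc : c = 1 / 2)
    (ha : a ∈ Γ) (hb : b ∈ Γ) (hac : rePart a = c) (hbc : rePart b = c)
    (hab : ¬ Commute a b) (h : rePart (a * b) = generatorRePart c) (hs : s ∈ Γ) :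
    s * a * s⁻¹ ≠ a⁻¹ := by
  intro hsa
  have hc0 : 0 < c := by rw [hc]; norm_num
  have hc1 : c < 1 := by rw [hc]; norm_num
  rw [generatorRePart, if_neg (by rw [hc]; norm_num)] at h
  obtain ⟨k, hk⟩ : ∃ k : ℤ, s * b⁻¹ * s⁻¹ = a ^ k * b * (a ^ k)⁻¹ := by
    refine exists_zpow_conj hmax hc0 hc1 ha hb
      (Γ.mul_mem (Γ.mul_mem hs (Γ.inv_mem hb)) (Γ.inv_mem hs)) hac hbc ?_ ?_
    · rw [rePart_conj, rePart_inv, hbc]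
    · have : a * (s * b⁻¹ * s⁻¹) = s * (a⁻¹ * b⁻¹) * s⁻¹ := by
        have : a = s * a⁻¹ * s⁻¹ := by
          rw [show s * a⁻¹ * s⁻¹ = (s * a * s⁻¹)⁻¹ by group, hsa, inv_inv]
        nth_rw 1 [this]
        group
      rw [this, rePart_conj, ← mul_inv_rev, rePart_inv, rePart_mul_comm]
  obtain ⟨z, hz⟩ : ∃ z, z = (a ^ k)⁻¹ * s := ⟨_, rfl⟩
  have hzΓ : z ∈ Γ := hz ▸ Γ.mul_mem (Γ.inv_mem (Γ.zpow_mem ha k)) hs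
  have hza : z * a * z⁻¹ = a⁻¹ := by
    have : z * a * z⁻¹ = (a ^ k)⁻¹ * (s * a * s⁻¹) * a ^ k := by
      rw [hz]
      group
    rw [this, hsa]
    group
  have hzb : z * b * z⁻¹ = b⁻¹ := by
    have : (z * b * z⁻¹)⁻¹ = (a ^ k)⁻¹ * (s * b⁻¹ * s⁻¹) * a ^ k := by
      rw [hz]
      group
    rw [← inv_inj, this, hk]
    group
  have hz0 : rePart z = 0 := by
    refine rePart_eq_zero_of_conj_eq_inv hza fun hcomm => ?_
    have h1 : a = a⁻¹ := by rw [← hza, hcomm.eq, mul_inv_cancel_right]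
    have h2 : a * a = 1 := by nth_rw 2 [h1]; exact mul_inv_cancel a
    have := rePart_mul_self a
    rw [h2, rePart_one, hac, hc] at this
    norm_num at this
  have hzz : z * z = -1 := by
    rw [← rePart_eq_neg_one_iff, rePart_mul_self, hz0]
    norm_num
  have hw : z * a * b * (z * a * b) = -(a⁻¹ * b⁻¹ * a * b) := by
    calc z * a * b * (z * a * b) = z * a * z⁻¹ * (z * b * z⁻¹) * (z * z) * (a * b) := by group
      _ = _ := by rw [hza, hzb, hzz]; simp [mul_assoc]
  have hw2 := rePart_mul_self (z * a * b)
  have hcomm := rePart_commutator a⁻¹ b⁻¹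
  rw [rePart_conj_mul, rePart_mul_self, inv_inv, inv_inv, rePart_mul_inv, rePart_mul_inv,
    ← rePart_inv (a⁻¹ * b), mul_inv_rev, inv_inv, rePart_mul_comm b⁻¹, rePart_mul_inv, rePart_inv,
    rePart_inv, h, hac, hbc, hc] at hcomm
  rw [hw, rePart_neg, hcomm] at hw2
  have hwΓ := Γ.mul_mem (Γ.mul_mem hzΓ ha) hb
  have hneg := (neg_one_mem_and_eq hmax hc0 hc1 ha hb hac hbc hab).1
  have h1 := rePart_le_or_eq_one hmax hwΓ
  have h2 := rePart_le_or_eq_one hmax (Γ.mul_mem hneg hwΓ)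
  rw [neg_one_mul, rePart_neg] at h2
  rcases h1 with h1 | h1 <;> rcases h2 with h2 | h2 <;> nlinarith

theorem closure_pair_eq_of_pos (hmax : ∀ x ∈ Γ, c < rePart x → x = 1) (hc : 0 < c)
    (hc1 : c < 1) (ha : a ∈ Γ) (hb : b ∈ Γ) (hac : rePart a = c) (hbc : rePart b = c)
    (hab : ¬ Commute a b) (h : rePart (a * b) = generatorRePart c) :
    Subgroup.closure {a, b} = Γ := by
  have haH : a ∈ Subgroup.closure {a, b} := Subgroup.subset_closure (by simp)
  have hbH : b ∈ Subgroup.closure {a, b} := Subgroup.subset_closure (by simp)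
  have hle : Subgroup.closure {a, b} ≤ Γ := by
    rw [Subgroup.closure_le]
    rintro x (rfl | rfl) <;> assumption
  set H := Subgroup.closure {a, b}
  refine le_antisymm hle fun x hx => ?_
  suffices IsConjBy H (x * a * x⁻¹) a by
    obtain ⟨y, hy, hya⟩ := this
    have hcomm : Commute a (y * x) := by
      refine (mul_inv_eq_iff_eq_mul.1 (Eq.trans ?_ hya) : Commute (y * x) a).symm
      group
    have := mem_zpowers_of_commute hmax (by linarith) hc1 ha hac
      (Γ.mul_mem (hle hy) hx) hcomm
    exact (H.mul_mem_cancel_left hy).1 (Subgroup.zpowers_le.2 haH this)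
  rcases isConjBy_or_isConjBy_inv_of_rePart_eq hmax hc hc1 ha hb hac hbc hab h haH hbH
    (Γ.mul_mem (Γ.mul_mem hx ha) (Γ.inv_mem hx)) ((rePart_conj x a).trans hac) with h1 | h1
  · exact h1
  by_cases hc2 : c = 1 / 2
  · obtain ⟨y, hy, hya⟩ := h1
    refine absurd (Eq.trans ?_ hya) (conj_ne_inv hmax hc2 ha hb hac hbc hab h
      (Γ.mul_mem (hle hy) hx))
    group
  · exact h1.trans (isConjBy_inv_self hmax hc hc1 ha hb hac hbc hab h haH hbH hc2).symm

end Gap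

theorem sum_rePart_sq_eq_one {a b : unitary (Quaternion ℝ)} (ha : rePart a = 0)
    (hb : rePart b = 0) (hab : rePart (a * b) = 0) (x : unitary (Quaternion ℝ)) :
    rePart x ^ 2 + rePart (x * a) ^ 2 + rePart (x * b) ^ 2 + rePart (x * (a * b)) ^ 2 = 1 := by
  obtain ⟨g, h1, h2⟩ := exists_conj_pair (a := a) (b := b)
    (a' := ⟨ofCoords 0 1 0 0, mem_unitary_of_normSq (by simp [normSq_def'])⟩)
    (b' := ⟨ofCoords 0 0 1 0, mem_unitary_of_normSq (by simp [normSq_def'])⟩)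
    (ha.trans (by simp [rePart])) (hb.trans (by simp [rePart])) (hab.trans (by simp [rePart]))
  have e1 : rePart (x * a) = rePart ((g * x * g⁻¹) * (g * a * g⁻¹)) := by
    rw [← rePart_conj g]
    congr 1
    group
  have e2 : rePart (x * b) = rePart ((g * x * g⁻¹) * (g * b * g⁻¹)) := by
    rw [← rePart_conj g]
    congr 1
    group
  have e3 : rePart (x * (a * b)) =
      rePart ((g * x * g⁻¹) * ((g * a * g⁻¹) * (g * b * g⁻¹))) := by
    rw [← rePart_conj g]
    congr 1
    group
  rw [e1, e2, e3, ← rePart_conj g x, h1, h2]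
  have := normSq_eq_one (g * x * g⁻¹)
  generalize g * x * g⁻¹ = y at *
  simp only [rePart, Submonoid.coe_mul, re_mul, imI_mul, imJ_mul, imK_mul, re_ofCoords,
    imI_ofCoords, imJ_ofCoords, imK_ofCoords]
  linarith

section Gap

variable {Γ : Subgroup (unitary (Quaternion ℝ))} {c : ℝ} {a b : unitary (Quaternion ℝ)}

theorem closure_pair_eq_of_eq_zero (hmax : ∀ x ∈ Γ, 0 < rePart x → x = 1) (ha : a ∈ Γ)
    (hb : b ∈ Γ) (hac : rePart a = 0) (hbc : rePart b = 0) (hab : ¬ Commute a b) :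
    rePart (a * b) = 0 ∧ Subgroup.closure {a, b} = Γ := by
  have haa : a * a = -1 := by
    rw [← rePart_eq_neg_one_iff, rePart_mul_self, hac]
    norm_num
  have hcases : ∀ x ∈ Γ, rePart x ≠ 0 → x = 1 ∨ x = -1 := by
    intro x hx h0
    rcases lt_or_gt_of_ne h0 with h | h
    · right
      rw [← neg_eq_iff_eq_neg]
      apply hmax
      · rw [← neg_one_mul, ← haa]
        exact Γ.mul_mem (Γ.mul_mem ha ha) hx
      · rw [rePart_neg]
        linarith
    · exact Or.inl (hmax x hx h)
  have hre : rePart (a * b) = 0 := by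
    by_contra h
    rcases hcases _ (Γ.mul_mem ha hb) h with h | h
    · rw [eq_inv_of_mul_eq_one_left h] at hab
      exact hab (Commute.refl b).inv_left
    · rw [← haa, mul_right_inj] at h
      exact hab (h ▸ Commute.refl a)
  refine ⟨hre, ?_⟩
  have haH : a ∈ Subgroup.closure {a, b} := Subgroup.subset_closure (by simp)
  have hbH : b ∈ Subgroup.closure {a, b} := Subgroup.subset_closure (by simp)
  apply le_antisymm
  · rw [Subgroup.closure_le]
    rintro x (rfl | rfl) <;> assumption
  intro x hx
  set H := Subgroup.closure {a, b}
  have hmem : ∀ t ∈ H, t ∈ Γ → rePart (x * t) ≠ 0 → x ∈ H := by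
    intro t htH htΓ h
    refine (H.mul_mem_cancel_right htH).1 ?_
    rcases hcases _ (Γ.mul_mem hx htΓ) h with h | h
    · exact h ▸ H.one_mem
    · rw [h, ← haa]
      exact H.mul_mem haH haH
  by_contra hxH
  have h1 : rePart (x * 1) = 0 := by_contra fun h => hxH (hmem 1 H.one_mem Γ.one_mem h)
  have h2 : rePart (x * a) = 0 := by_contra fun h => hxH (hmem a haH ha h)
  have h3 : rePart (x * b) = 0 := by_contra fun h => hxH (hmem b hbH hb h)
  have h4 : rePart (x * (a * b)) = 0 :=
    by_contra fun h => hxH (hmem _ (H.mul_mem haH hbH) (Γ.mul_mem ha hb) h)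
  have := sum_rePart_sq_eq_one hac hbc hre x
  rw [mul_one] at h1
  rw [h1, h2, h3, h4] at this
  norm_num at this

theorem nonneg_of_not_commute (hmax : ∀ x ∈ Γ, c < rePart x → x = 1) (ha : a ∈ Γ) (hb : b ∈ Γ)
    (hac : rePart a = c) (hbc : rePart b = c) (hab : ¬ Commute a b) : 0 ≤ c := by
  have h := rePart_mul_add a b
  rw [hac, hbc] at h
  have h1 : rePart (a * b) ≤ c := not_lt.1 fun h1 => hab <| by
    rw [eq_inv_of_mul_eq_one_left (hmax _ (Γ.mul_mem ha hb) h1)]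
    exact (Commute.refl b).inv_left
  have h2 : rePart (a⁻¹ * b) ≤ c := not_lt.1 fun h2 => hab <| by
    rw [inv_mul_eq_one.1 (hmax _ (Γ.mul_mem (Γ.inv_mem ha) hb) h2)]
  nlinarith [sq_nonneg c]

theorem exists_closure_pair_eq (hmax : ∀ x ∈ Γ, c < rePart x → x = 1) (hc1 : c < 1) (ha : a ∈ Γ)
    (hb : b ∈ Γ) (hac : rePart a = c) (hbc : rePart b = c) (hab : ¬ Commute a b) :
    ∃ b ∈ Γ, rePart b = c ∧ rePart (a * b) = generatorRePart c ∧
      Subgroup.closure {a, b} = Γ := by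
  rcases (nonneg_of_not_commute hmax ha hb hac hbc hab).eq_or_lt with rfl | hc
  · obtain ⟨h1, h2⟩ := closure_pair_eq_of_eq_zero hmax ha hb hac hbc hab
    exact ⟨b, hb, hbc, by simpa [generatorRePart] using h1, h2⟩
  · rcases rePart_mul_eq_generatorRePart hmax hc hc1 ha hb hac hbc hab with h | h
    · exact ⟨b, hb, hbc, h, closure_pair_eq_of_pos hmax hc hc1 ha hb hac hbc hab h⟩
    · have hbc' := (rePart_inv b).trans hbc
      exact ⟨b⁻¹, Γ.inv_mem hb, hbc', h, closure_pair_eq_of_pos hmax hc hc1 ha (Γ.inv_mem hb) hac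
        hbc' (by rwa [Commute.inv_right_iff]) h⟩

theorem closure_eq_of_forall_commute (hmax : ∀ x ∈ Γ, c < rePart x → x = 1) (hc1 : c < 1)
    (ha : a ∈ Γ) (hac : rePart a = c) (hcomm : ∀ s ∈ Γ, rePart s = c → Commute a s) :
    Subgroup.closure {a, a} = Γ ∨
      ∃ b ∈ Γ, rePart b = 0 ∧ rePart (a * b) = 0 ∧ Subgroup.closure {a, b} = Γ := by
  have hmem : ∀ x ∈ Γ, Commute a x → x ∈ Subgroup.zpowers a := by
    intro x hx hax
    rcases lt_or_ge (-1) c with hc | hc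
    · exact mem_zpowers_of_commute hmax hc hc1 ha hac hx hax
    · have ha1 : a = -1 := rePart_eq_neg_one_iff.1 (by linarith [neg_one_le_rePart a])
      rcases rePart_le_or_eq_one hmax hx with h | h
      · have hx1 : x = -1 := rePart_eq_neg_one_iff.1 (by linarith [neg_one_le_rePart x])
        rw [ha1, hx1]
        exact Subgroup.mem_zpowers _
      · rw [rePart_eq_one_iff.1 h]
        exact Subgroup.one_mem _
  by_cases hall : ∀ x ∈ Γ, Commute a x
  · left
    rw [Set.pair_eq_singleton, ← Subgroup.zpowers_eq_closure]
    exact le_antisymm (Subgroup.zpowers_le.2 ha) fun x hx => hmem x hx (hall x hx)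
  right
  have hconj : ∀ x ∈ Γ, ¬ Commute a x → x * a * x⁻¹ = a⁻¹ := by
    intro x hx hax
    have hre := (rePart_conj x a).trans hac
    refine (eq_or_eq_inv_of_commute (hcomm _ (Γ.mul_mem (Γ.mul_mem hx ha) (Γ.inv_mem hx)) hre)
      (hac.trans hre.symm)).resolve_left fun h => hax ?_
    exact (mul_inv_eq_iff_eq_mul.1 h : Commute x a).symm
  push Not at hall
  obtain ⟨b, hb, hab⟩ := hall
  refine ⟨b, hb, rePart_eq_zero_of_conj_eq_inv (hconj b hb hab) fun h => hab h.symm, ?_, ?_⟩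
  · have hab' : ¬ Commute a (a * b) := fun h => hab
      (mul_left_cancel (h.eq.trans (mul_assoc a b a)))
    exact rePart_eq_zero_of_conj_eq_inv (hconj _ (Γ.mul_mem ha hb) hab') fun h => hab' h.symm
  · apply le_antisymm
    · rw [Subgroup.closure_le]
      rintro x (rfl | rfl) <;> assumption
    intro x hx
    have haH : a ∈ Subgroup.closure {a, b} := Subgroup.subset_closure (by simp)
    have hbH : b ∈ Subgroup.closure {a, b} := Subgroup.subset_closure (by simp)
    by_cases hax : Commute a x
    · exact Subgroup.zpowers_le.2 haH (hmem x hx hax)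
    · refine (Subgroup.mul_mem_cancel_right _ hbH).1
        (Subgroup.zpowers_le.2 haH (hmem _ (Γ.mul_mem hx hb) ?_))
      have : x * b * a * (x * b)⁻¹ = a := by
        calc x * b * a * (x * b)⁻¹ = x * (b * a * b⁻¹) * x⁻¹ := by group
          _ = (x * a * x⁻¹)⁻¹ := by rw [hconj b hb hab]; group
          _ = a := by rw [hconj x hx hax, inv_inv]
      exact (mul_inv_eq_iff_eq_mul.1 this : Commute (x * b) a).symm

end Gap

variable {Γ₁ Γ₂ : Subgroup (unitary (Quaternion ℝ))}

theorem exists_map_conj_eq [Finite Γ₂] (hcard : Nat.card Γ₁ = Nat.card Γ₂)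
    {a b a' b' : unitary (Quaternion ℝ)} (h : Subgroup.closure {a, b} = Γ₁) (ha' : a' ∈ Γ₂)
    (hb' : b' ∈ Γ₂) (ha : rePart a = rePart a') (hb : rePart b = rePart b')
    (hab : rePart (a * b) = rePart (a' * b')) :
    ∃ g : unitary (Quaternion ℝ), Subgroup.map (MulAut.conj g).toMonoidHom Γ₁ = Γ₂ := by
  obtain ⟨g, rfl, rfl⟩ := exists_conj_pair ha hb hab
  refine ⟨g, Subgroup.eq_of_le_of_card_ge ?_ ?_⟩
  · rw [← h, Subgroup.map_le_iff_le_comap, Subgroup.closure_le]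
    rintro x (rfl | rfl) <;> assumption
  · rw [Subgroup.card_map_of_injective (MulAut.conj g).injective, hcard]

theorem exists_map_conj_eq_symm
    (h : ∃ g : unitary (Quaternion ℝ), Subgroup.map (MulAut.conj g).toMonoidHom Γ₁ = Γ₂) :
    ∃ g : unitary (Quaternion ℝ), Subgroup.map (MulAut.conj g).toMonoidHom Γ₂ = Γ₁ := by
  obtain ⟨g, rfl⟩ := h
  refine ⟨g⁻¹, ?_⟩
  rw [Subgroup.map_map]
  convert Subgroup.map_id Γ₁
  ext1 x
  simp [mul_assoc]

theorem exists_not_commute_of_equiv (φ : Γ₁ ≃ Γ₂)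
    (hφ : ∀ x : Γ₁, rePart (φ x : unitary (Quaternion ℝ)) = rePart (x : unitary (Quaternion ℝ)))
    {a b : unitary (Quaternion ℝ)} (ha : a ∈ Γ₁) (hb : b ∈ Γ₁) (h : rePart a = rePart b)
    (hab : ¬ Commute a b) :
    ∃ a' ∈ Γ₂, ∃ b' ∈ Γ₂, rePart a' = rePart a ∧ rePart b' = rePart a ∧ ¬ Commute a' b' := by
  by_contra! hcomm
  have hre : ∀ x (hx : x ∈ Γ₁), rePart x = rePart a →
      φ ⟨x, hx⟩ = φ ⟨a, ha⟩ ∨ φ ⟨x, hx⟩ = (φ ⟨a, ha⟩)⁻¹ := by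
    intro x hx hxa
    have := eq_or_eq_inv_of_commute (hcomm _ (φ ⟨a, ha⟩).2 _ (φ ⟨x, hx⟩).2 (hφ _)
      ((hφ _).trans hxa)) ((hφ _).trans (hxa.symm.trans (hφ ⟨x, hx⟩).symm))
    exact_mod_cast this
  have heq : ∀ {x y : unitary (Quaternion ℝ)} (hx : x ∈ Γ₁) (hy : y ∈ Γ₁),
      φ ⟨x, hx⟩ = φ ⟨y, hy⟩ → x = y := fun hx hy hxy => congrArg Subtype.val (φ.injective hxy)
  rcases hre b hb h.symm with h1 | h1
  · exact hab (heq hb ha h1 ▸ Commute.refl _)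
  rcases hre a⁻¹ (Γ₁.inv_mem ha) (rePart_inv a) with h2 | h2
  · have h3 : a * a = 1 := by
      nth_rw 2 [← heq _ _ h2]
      exact mul_inv_cancel a
    have h4 := rePart_mul_self a
    rw [h3, rePart_one] at h4
    have h5 : (rePart a - 1) * (rePart a + 1) = 0 := by linarith
    rcases mul_eq_zero.1 h5 with h6 | h6
    · rw [rePart_eq_one_iff.1 (sub_eq_zero.1 h6)] at hab
      exact hab (Commute.one_left b)
    · rw [rePart_eq_neg_one_iff.1 (eq_neg_of_add_eq_zero_left h6)] at hab
      exact hab (Commute.neg_one_left b)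
  · rw [heq _ _ (h1.trans h2.symm)] at hab
    exact hab (Commute.refl a).inv_right

theorem exists_map_conj_eq_of_equiv [Finite Γ₁] [Finite Γ₂] (φ : Γ₁ ≃ Γ₂)
    (hφ : ∀ x : Γ₁, rePart (φ x : unitary (Quaternion ℝ)) = rePart (x : unitary (Quaternion ℝ))) :
    ∃ g : unitary (Quaternion ℝ), Subgroup.map (MulAut.conj g).toMonoidHom Γ₁ = Γ₂ := by
  have hcard : Nat.card Γ₁ = Nat.card Γ₂ := Nat.card_congr φ
  rcases isEmpty_or_nonempty {x : Γ₁ // x ≠ 1} with hemp | hne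
  · have h1 : Γ₁ = ⊥ := (Subgroup.eq_bot_iff_forall _).2 fun x hx => by
      by_contra h
      exact hemp.false ⟨⟨x, hx⟩, fun h' => h (congrArg Subtype.val h')⟩
    have h2 : Γ₂ = ⊥ := by
      rw [← Subgroup.card_eq_one, ← hcard, h1]
      exact Subgroup.card_bot
    exact ⟨1, by rw [h1, h2, Subgroup.map_bot]⟩
  obtain ⟨⟨⟨a, ha⟩, ha1⟩, hamax⟩ :=
    Finite.exists_max fun x : {x : Γ₁ // x ≠ 1} => rePart ((x : Γ₁) : unitary (Quaternion ℝ))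
  obtain ⟨c, hac⟩ : ∃ c, rePart a = c := ⟨_, rfl⟩
  have hc1 : c < 1 := hac ▸ lt_of_le_of_ne (rePart_le_one a) fun h =>
    ha1 (Subtype.ext (rePart_eq_one_iff.1 h))
  have hmax₁ : ∀ x ∈ Γ₁, c < rePart x → x = 1 := by
    intro x hx hcx
    by_contra h
    have := hamax ⟨⟨x, hx⟩, fun h' => h (congrArg Subtype.val h')⟩
    simp only [hac] at this
    linarith
  have hφ' : ∀ x : Γ₂, rePart (φ.symm x : unitary (Quaternion ℝ)) =
      rePart (x : unitary (Quaternion ℝ)) := fun x => by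
    rw [← hφ, Equiv.apply_symm_apply]
  have hmax₂ : ∀ x ∈ Γ₂, c < rePart x → x = 1 := by
    intro x hx hcx
    rw [← rePart_eq_one_iff, ← hφ' ⟨x, hx⟩]
    rw [hmax₁ (φ.symm ⟨x, hx⟩) (φ.symm ⟨x, hx⟩).2 (by rw [hφ']; exact hcx), rePart_one]
  have ha' := (φ ⟨a, ha⟩).2
  have hac' := (hφ ⟨a, ha⟩).trans hac
  set a' := (φ ⟨a, ha⟩ : unitary (Quaternion ℝ))
  by_cases hcomm : ∀ x ∈ Γ₁, ∀ y ∈ Γ₁, rePart x = c → rePart y = c → Commute x y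
  · have hcomm₂ : ∀ y ∈ Γ₂, rePart y = c → Commute a' y := by
      by_contra! h
      obtain ⟨y, hy, hyc, h⟩ := h
      obtain ⟨u, hu, v, hv, huc, hvc, huv⟩ := exists_not_commute_of_equiv φ.symm hφ' ha' hy
        (hac'.trans hyc.symm) h
      exact huv (hcomm u hu v hv (huc.trans hac') (hvc.trans hac'))
    have hre : rePart (a * a) = rePart (a' * a') := by
      rw [rePart_mul_self, rePart_mul_self, hac, hac']
    rcases closure_eq_of_forall_commute hmax₁ hc1 ha hac fun y hy => hcomm a ha y hy hac with
      h | ⟨b, hb, hb0, hab, h⟩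
    · exact exists_map_conj_eq hcard h ha' ha' (hac.trans hac'.symm) (hac.trans hac'.symm) hre
    rcases closure_eq_of_forall_commute hmax₂ hc1 ha' hac' hcomm₂ with
      h' | ⟨b', hb', hb0', hab', h'⟩
    · exact exists_map_conj_eq_symm (exists_map_conj_eq hcard.symm h' ha ha (hac'.trans hac.symm)
        (hac'.trans hac.symm) hre.symm)
    · exact exists_map_conj_eq hcard h ha' hb' (hac.trans hac'.symm) (hb0.trans hb0'.symm)
        (hab.trans hab'.symm)
  · push Not at hcomm
    obtain ⟨x, hx, y, hy, hxc, hyc, hxy⟩ := hcomm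
    obtain ⟨u, hu, v, hv, huc, hvc, huv⟩ := exists_not_commute_of_equiv φ hφ hx hy
      (hxc.trans hyc.symm) hxy
    rw [hxc] at huc hvc
    obtain ⟨b, hb, hbc, hxb, h⟩ := exists_closure_pair_eq hmax₁ hc1 hx hy hxc hyc hxy
    obtain ⟨b', hb', hbc', hub, -⟩ := exists_closure_pair_eq hmax₂ hc1 hu hv huc hvc huv
    exact exists_map_conj_eq hcard h hu hb' (hxc.trans huc.symm) (hbc.trans hbc'.symm)
      (hxb.trans hub.symm)

end UnitQuaternion

/-- Any two almost conjugate finite subgroups of `SU(2)` (realized as the group of unit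
quaternions) are conjugate in `SU(2)`. -/
theorem almostConjugate_subgroups_of_su2_are_conjugate
    (Γ₁ Γ₂ : Subgroup (unitary (Quaternion ℝ)))
    [Finite Γ₁] [Finite Γ₂] (h : AlmostConjugate Γ₁ Γ₂) :
    ∃ g : unitary (Quaternion ℝ),
      Subgroup.map (MulAut.conj g).toMonoidHom Γ₁ = Γ₂ := by
  obtain ⟨φ, hφ⟩ := h
  exact UnitQuaternion.exists_map_conj_eq_of_equiv φ fun x =>
    (UnitQuaternion.rePart_eq_of_isConj (hφ x)).symm
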